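/- For every C₀ > 0 there exists C > 0, depending only on C₀, with the following property: if Φ : 𝔻 → ℝ³ is a smooth conformal Willmore immersion with conformal factor λ, Gauss map n, mean curvature H and tracefree second fundamental form Å, satisfying ∫_𝔻 |∇n|² dxdy ≤ 4π/3 and ‖|∇λ|‖_{L^{2,∞}(𝔻)} ≤ C₀, then for every Lipschitz map U = (U₁, U₂) : ℝ² → ℝ² with compact support contained in 𝔻_{1/2}, one has |∫_{𝔻_{1/2}} (∂_xH · U₁ + ∂_yH · U₂) e^{2λ} dxdy| ≤ C · ‖|Åe^{−λ}|‖_{L²(𝔻_{1/2})} · ‖e^λ |∇U|‖_{L²(𝔻_{1/2})}, where |∇U|² := |∂_xU₁|² + |∂_yU₁|² + |∂_xU₂|² + |∂_yU₂|². -/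

import Mathlib

/-!
The gradient of the mean curvature is the divergence of the tracefree second fundamental form.
In conformal coordinates the Codazzi equations read `e^{2λ} ∇H = div Å` with the flat divergence
(`meanCurv_x`, `meanCurv_y`), and this holds for every conformal immersion, Willmore or not. They
follow from the commutation of third derivatives of `Φ` (`codazzi_raw`), the Weingarten relation
for the tangential vectors `∂_x n`, `∂_y n` (`inner_d2_dgauss`) and the Christoffel symbols of
`e^{2λ}(dx² + dy²)` (`christoffel`).

Integrating by parts against the compactly supported Lipschitz field `U` (`integral_by_parts`)
gives `∫ e^{2λ} ⟨∇H, U⟩ = -∫ Å : ∇U`, and since `|Å : ∇U| ≤ (e^{-λ}|Å|) (e^λ |∇U|)` pointwise, the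
Cauchy–Schwarz inequality in `L²` yields the estimate with `C = 1`.

The matrix `Å` is encoded by its two independent entries `Å₁₁ = halfDiff Φ` and
`Å₁₂ = sff Φ ex ey`.
-/

open MeasureTheory Real
open scoped RealInnerProductSpace

noncomputable section

abbrev R2 : Type := ℝ × ℝ
abbrev R3 : Type := EuclideanSpace ℝ (Fin 3)
abbrev R5 : Type := EuclideanSpace ℝ (Fin 5)

/-- The open disk of radius `ρ` centered at the origin in `ℝ²`. -/
def disk (ρ : ℝ) : Set R2 := Metric.ball 0 ρ

/-- Partial derivative in the `x`-direction. -/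
def pdx {E : Type*} [NormedAddCommGroup E] [NormedSpace ℝ E] (f : R2 → E) (p : R2) : E :=
  fderiv ℝ f p (1, 0)

/-- Partial derivative in the `y`-direction. -/
def pdy {E : Type*} [NormedAddCommGroup E] [NormedSpace ℝ E] (f : R2 → E) (p : R2) : E :=
  fderiv ℝ f p (0, 1)

/-- The cross product in `ℝ³`. -/
def cross (u v : R3) : R3 :=
  (EuclideanSpace.equiv (Fin 3) ℝ).symm
    ![u 1 * v 2 - u 2 * v 1, u 2 * v 0 - u 0 * v 2, u 0 * v 1 - u 1 * v 0]

/-- The Gauss map `n := (∂ₓΦ × ∂_yΦ)/|∂ₓΦ × ∂_yΦ|`. -/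
def gaussMap (Φ : R2 → R3) (p : R2) : R3 :=
  ‖cross (pdx Φ p) (pdy Φ p)‖⁻¹ • cross (pdx Φ p) (pdy Φ p)

/-- The second derivative `∂_v ∂_w Φ`. -/
def d2 (Φ : R2 → R3) (v w : R2) (p : R2) : R3 :=
  fderiv ℝ (fun q => fderiv ℝ Φ q w) p v

/-- Entry of the second fundamental form `⟨∂_v ∂_w Φ, n⟩`. -/
def sff (Φ : R2 → R3) (v w : R2) (p : R2) : ℝ :=
  ⟪d2 Φ v w p, gaussMap Φ p⟫

def ex : R2 := (1, 0)
def ey : R2 := (0, 1)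

/-- The mean curvature `H := e^{-2λ}(A₁₁ + A₂₂)/2`. -/
def meanCurv (Φ : R2 → R3) (lam : R2 → ℝ) (p : R2) : ℝ :=
  Real.exp (-(2 * lam p)) * (sff Φ ex ex p + sff Φ ey ey p) / 2

/-- Entry `Å₁₁` of the tracefree second fundamental form. -/
def tf11 (Φ : R2 → R3) (lam : R2 → ℝ) (p : R2) : ℝ :=
  sff Φ ex ex p - meanCurv Φ lam p * Real.exp (2 * lam p)

/-- Entry `Å₁₂`. -/
def tf12 (Φ : R2 → R3) (_lam : R2 → ℝ) (p : R2) : ℝ := sff Φ ex ey p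

/-- Entry `Å₂₁`. -/
def tf21 (Φ : R2 → R3) (_lam : R2 → ℝ) (p : R2) : ℝ := sff Φ ey ex p

/-- Entry `Å₂₂`. -/
def tf22 (Φ : R2 → R3) (lam : R2 → ℝ) (p : R2) : ℝ :=
  sff Φ ey ey p - meanCurv Φ lam p * Real.exp (2 * lam p)

/-- `Å₁₁² + Å₁₂² + Å₂₁² + Å₂₂²`. -/
def tfNormSq (Φ : R2 → R3) (lam : R2 → ℝ) (p : R2) : ℝ :=
  tf11 Φ lam p ^ 2 + tf12 Φ lam p ^ 2 + tf21 Φ lam p ^ 2 + tf22 Φ lam p ^ 2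

/-- The pointwise quantity `|Å e^{-λ}|`. -/
def ringA (Φ : R2 → R3) (lam : R2 → ℝ) (p : R2) : ℝ :=
  Real.exp (-(lam p)) * Real.sqrt (tfNormSq Φ lam p)

/-- `Φ` is a smooth conformal immersion on `Ω` with conformal factor `lam`. -/
structure ConformalImmersion (Ω : Set R2) (Φ : R2 → R3) (lam : R2 → ℝ) : Prop where
  smooth : ContDiffOn ℝ (⊤ : ℕ∞) Φ Ω
  smooth_lam : ContDiffOn ℝ (⊤ : ℕ∞) lam Ω
  orth : ∀ p ∈ Ω, ⟪pdx Φ p, pdy Φ p⟫ = 0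
  norm_x : ∀ p ∈ Ω, ‖pdx Φ p‖ = Real.exp (lam p)
  norm_y : ∀ p ∈ Ω, ‖pdy Φ p‖ = Real.exp (lam p)

/-- The Willmore equation `ΔH + e^{-2λ}|Å|² H = 0` on `Ω`. -/
def IsWillmore (Φ : R2 → R3) (lam : R2 → ℝ) (Ω : Set R2) : Prop :=
  ∀ p ∈ Ω,
    pdx (pdx (meanCurv Φ lam)) p + pdy (pdy (meanCurv Φ lam)) p
      + Real.exp (-(2 * lam p)) * tfNormSq Φ lam p * meanCurv Φ lam p = 0

/-- Pointwise norm of the gradient of a scalar function. -/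
def gradNorm (f : R2 → ℝ) (p : R2) : ℝ := Real.sqrt (pdx f p ^ 2 + pdy f p ^ 2)

/-- Pointwise squared norm of the gradient of a vector-valued function. -/
def gradSqV {E : Type*} [NormedAddCommGroup E] [NormedSpace ℝ E] (f : R2 → E) (p : R2) : ℝ :=
  ‖pdx f p‖ ^ 2 + ‖pdy f p‖ ^ 2

/-- The `L²(Ω)` norm of a scalar function. -/
def l2norm (f : R2 → ℝ) (Ω : Set R2) : ℝ := Real.sqrt (∫ p in Ω, f p ^ 2)

/-- `‖f‖_{L^{2,∞}(Ω)} ≤ M`, i.e. `sup_{α>0} α |{|f|>α}|^{1/2} ≤ M`. -/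
def wl2le (f : R2 → ℝ) (Ω : Set R2) (M : ℝ) : Prop :=
  ∀ α > (0:ℝ), α * Real.sqrt ((volume {p ∈ Ω | α < |f p|}).toReal) ≤ M

/-- The Lorentz product on `ℝ⁵ = ℝ^{4,1}`. -/
def lorentz (v w : R5) : ℝ :=
  v 0 * w 0 + v 1 * w 1 + v 2 * w 2 + v 3 * w 3 - v 4 * w 4

/-- The conformal Gauss map `Y := H (Φ, (|Φ|²-1)/2, (|Φ|²+1)/2) + (n, ⟨n,Φ⟩, ⟨n,Φ⟩)`. -/
def confGauss (Φ : R2 → R3) (lam : R2 → ℝ) (p : R2) : R5 :=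
  (EuclideanSpace.equiv (Fin 5) ℝ).symm
    ![meanCurv Φ lam p * Φ p 0 + gaussMap Φ p 0,
      meanCurv Φ lam p * Φ p 1 + gaussMap Φ p 1,
      meanCurv Φ lam p * Φ p 2 + gaussMap Φ p 2,
      meanCurv Φ lam p * ((‖Φ p‖ ^ 2 - 1) / 2) + ⟪gaussMap Φ p, Φ p⟫,
      meanCurv Φ lam p * ((‖Φ p‖ ^ 2 + 1) / 2) + ⟪gaussMap Φ p, Φ p⟫]

/-- Elementary Möbius pieces: isometries, dilations, inversions. -/
inductive MobiusPiece : (R3 → R3) → Prop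
  | isom (e : R3 ≃ᵢ R3) : MobiusPiece (fun x => e x)
  | dil (r : ℝ) (hr : 0 < r) : MobiusPiece (fun x => r • x)
  | inv (a : R3) : MobiusPiece (fun x => (‖x - a‖ ^ 2)⁻¹ • (x - a))

/-- A Möbius transformation of `ℝ³`: a finite composition of isometries, dilations and
inversions. -/
inductive IsMobius : (R3 → R3) → Prop
  | id : IsMobius id
  | comp {f g : R3 → R3} : MobiusPiece f → IsMobius g → IsMobius (f ∘ g)

/-! ### Linear algebra in `ℝ³` -/

lemma inner_cross_left (u v : R3) : ⟪u, cross u v⟫ = 0 := by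
  simp [cross, PiLp.inner_apply, Fin.sum_univ_three]; ring

lemma inner_cross_right (u v : R3) : ⟪v, cross u v⟫ = 0 := by
  simp [cross, PiLp.inner_apply, Fin.sum_univ_three]; ring

lemma norm_cross_sq (u v : R3) : ‖cross u v‖ ^ 2 = ‖u‖ ^ 2 * ‖v‖ ^ 2 - ⟪u, v⟫ ^ 2 := by
  simp [cross, EuclideanSpace.real_norm_sq_eq, PiLp.inner_apply, Fin.sum_univ_three]; ring

/-- Parseval's identity for the frame `u, v, n`, where `u, v` are orthogonal of the same
length `r` and `n` is a unit normal. -/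
lemma inner_frame {u v n : R3} {r : ℝ} (hr : 0 < r) (hu : ‖u‖ = r) (hv : ‖v‖ = r)
    (hn : ‖n‖ = 1) (huv : ⟪u, v⟫ = 0) (hun : ⟪u, n⟫ = 0) (hvn : ⟪v, n⟫ = 0) (w z : R3) :
    r ^ 2 * ⟪w, z⟫ = ⟪w, u⟫ * ⟪z, u⟫ + ⟪w, v⟫ * ⟪z, v⟫ + r ^ 2 * (⟪w, n⟫ * ⟪z, n⟫) := by
  have ho : Orthonormal ℝ ![r⁻¹ • u, r⁻¹ • v, n] := by
    rw [orthonormal_iff_ite]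
    have h1 := real_inner_self_eq_norm_sq u
    have h2 := real_inner_self_eq_norm_sq v
    have hvu : ⟪v, u⟫ = 0 := by rw [real_inner_comm]; exact huv
    have hnu : ⟪n, u⟫ = 0 := by rw [real_inner_comm]; exact hun
    have hnv : ⟪n, v⟫ = 0 := by rw [real_inner_comm]; exact hvn
    have hr' := hr.ne'
    intro i j
    fin_cases i <;> fin_cases j <;>
      simp [real_inner_smul_left, real_inner_smul_right, hu, hv, hn, huv, hun, hvn, hvu, hnu,
        hnv, hr', norm_smul, abs_of_pos hr]
  have hb := OrthonormalBasis.sum_inner_mul_inner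
    ((basisOfOrthonormalOfCardEqFinrank ho (by simp)).toOrthonormalBasis
      (by rw [coe_basisOfOrthonormalOfCardEqFinrank]; exact ho)) w z
  simp [Fin.sum_univ_three, real_inner_smul_left, real_inner_smul_right] at hb
  rw [← hb, real_inner_comm z u, real_inner_comm z v, real_inner_comm z n]
  field_simp

/-! ### Directional derivatives of smooth maps -/

lemma isOpen_disk (r : ℝ) : IsOpen (disk r) := Metric.isOpen_ball

section Calculus
variable {E : Type*} [NormedAddCommGroup E] [NormedSpace ℝ E]

lemma contDiffOn_dir {f : R2 → E} {Ω : Set R2} (hΩ : IsOpen Ω)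
    (hf : ContDiffOn ℝ (⊤ : ℕ∞) f Ω) (v : R2) :
    ContDiffOn ℝ (⊤ : ℕ∞) (fun q => fderiv ℝ f q v) Ω :=
  (hf.fderiv_of_isOpen hΩ (by simp)).clm_apply contDiffOn_const

lemma diffAt {f : R2 → E} {Ω : Set R2} (hΩ : IsOpen Ω)
    (hf : ContDiffOn ℝ (⊤ : ℕ∞) f Ω) {p : R2} (hp : p ∈ Ω) : DifferentiableAt ℝ f p :=
  (hf.contDiffAt (hΩ.mem_nhds hp)).differentiableAt (by simp)

/-- Partial derivatives of a smooth map commute. -/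
lemma d2_symm {f : R2 → R3} {Ω : Set R2} (hΩ : IsOpen Ω)
    (hf : ContDiffOn ℝ (⊤ : ℕ∞) f Ω) {p : R2} (hp : p ∈ Ω) (v w : R2) :
    d2 f v w p = d2 f w v p := by
  have hd : DifferentiableAt ℝ (fderiv ℝ f) p :=
    diffAt hΩ (hf.fderiv_of_isOpen hΩ (by simp)) hp
  have hs : IsSymmSndFDerivAt ℝ f p :=
    (hf.contDiffAt (hΩ.mem_nhds hp)).isSymmSndFDerivAt (by
      simp only [minSmoothness_of_isRCLikeNormedField]
      exact WithTop.coe_le_coe.2 (le_top : (2 : ℕ∞) ≤ ⊤))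
  have key : ∀ a b : R2, d2 f a b p = fderiv ℝ (fderiv ℝ f) p a b := by
    intro a b
    unfold d2
    rw [fderiv_clm_apply hd (differentiableAt_const b)]
    simp
  rw [key, key, hs.eq]

/-- Differentiating an identity which holds on an open set. -/
lemma fderiv_congr_on {f g : R2 → E} {Ω : Set R2} (hΩ : IsOpen Ω)
    (h : ∀ q ∈ Ω, f q = g q) {p : R2} (hp : p ∈ Ω) : fderiv ℝ f p = fderiv ℝ g p :=
  Filter.EventuallyEq.fderiv_eq (Filter.eventually_of_mem (hΩ.mem_nhds hp) h)

end Calculus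

/-! ### The Codazzi equations in conformal coordinates -/

section Geometry
variable {Ω : Set R2} {Φ : R2 → R3} {lam : R2 → ℝ}

lemma norm_cross_eq (h : ConformalImmersion Ω Φ lam) {p : R2} (hp : p ∈ Ω) :
    ‖cross (pdx Φ p) (pdy Φ p)‖ = rexp (2 * lam p) := by
  have h1 := norm_cross_sq (pdx Φ p) (pdy Φ p)
  rw [h.orth p hp, h.norm_x p hp, h.norm_y p hp] at h1
  have h2 : rexp (2 * lam p) = rexp (lam p) ^ 2 := by rw [← Real.exp_nat_mul]; norm_num
  rw [h2]
  refine (pow_left_inj₀ (norm_nonneg _) (by positivity) two_ne_zero).1 ?_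
  rw [h1]; ring

lemma gauss_eq (h : ConformalImmersion Ω Φ lam) {p : R2} (hp : p ∈ Ω) :
    gaussMap Φ p = rexp (-(2 * lam p)) • cross (pdx Φ p) (pdy Φ p) := by
  rw [gaussMap, norm_cross_eq h hp, Real.exp_neg]

lemma norm_gauss (h : ConformalImmersion Ω Φ lam) {p : R2} (hp : p ∈ Ω) :
    ‖gaussMap Φ p‖ = 1 := by
  rw [gauss_eq h hp, norm_smul, norm_cross_eq h hp, Real.norm_eq_abs, Real.abs_exp,
    ← Real.exp_add]
  simp

lemma inner_x_gauss (Φ : R2 → R3) (p : R2) : ⟪fderiv ℝ Φ p ex, gaussMap Φ p⟫ = 0 := by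
  have := inner_cross_left (pdx Φ p) (pdy Φ p)
  rw [gaussMap, real_inner_smul_right]
  exact mul_eq_zero_of_right _ this

lemma inner_y_gauss (Φ : R2 → R3) (p : R2) : ⟪fderiv ℝ Φ p ey, gaussMap Φ p⟫ = 0 := by
  have := inner_cross_right (pdx Φ p) (pdy Φ p)
  rw [gaussMap, real_inner_smul_right]
  exact mul_eq_zero_of_right _ this

lemma inner_dir_gauss (Φ : R2 → R3) (p v : R2) : ⟪fderiv ℝ Φ p v, gaussMap Φ p⟫ = 0 := by
  have hv : v = v.1 • ex + v.2 • ey := by ext <;> simp [ex, ey]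
  rw [hv, map_add, map_smul, map_smul, inner_add_left, real_inner_smul_left,
    real_inner_smul_left, inner_x_gauss, inner_y_gauss]
  simp

lemma contDiffOn_gauss (hΩ : IsOpen Ω) (h : ConformalImmersion Ω Φ lam) :
    ContDiffOn ℝ (⊤ : ℕ∞) (gaussMap Φ) Ω := by
  have hx : ContDiffOn ℝ (⊤ : ℕ∞) (pdx Φ) Ω := contDiffOn_dir hΩ h.smooth (1, 0)
  have hy : ContDiffOn ℝ (⊤ : ℕ∞) (pdy Φ) Ω := contDiffOn_dir hΩ h.smooth (0, 1)
  have hx' := contDiffOn_euclidean.1 hx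
  have hy' := contDiffOn_euclidean.1 hy
  refine ContDiffOn.congr ?_ (fun p hp => gauss_eq h hp)
  refine ContDiffOn.smul (contDiffOn_const.mul h.smooth_lam).neg.exp ?_
  rw [contDiffOn_euclidean]
  intro i
  fin_cases i
  · exact ((hx' 1).mul (hy' 2)).sub ((hx' 2).mul (hy' 1))
  · exact ((hx' 2).mul (hy' 0)).sub ((hx' 0).mul (hy' 2))
  · exact ((hx' 0).mul (hy' 1)).sub ((hx' 1).mul (hy' 0))

lemma contDiffOn_d2 (hΩ : IsOpen Ω) (h : ConformalImmersion Ω Φ lam) (v w : R2) :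
    ContDiffOn ℝ (⊤ : ℕ∞) (d2 Φ v w) Ω :=
  contDiffOn_dir hΩ (contDiffOn_dir hΩ h.smooth w) v

lemma contDiffOn_sff (hΩ : IsOpen Ω) (h : ConformalImmersion Ω Φ lam) (v w : R2) :
    ContDiffOn ℝ (⊤ : ℕ∞) (sff Φ v w) Ω :=
  (contDiffOn_d2 hΩ h v w).inner ℝ (contDiffOn_gauss hΩ h)

lemma sff_symm (hΩ : IsOpen Ω) (h : ConformalImmersion Ω Φ lam) {p : R2} (hp : p ∈ Ω)
    (v w : R2) : sff Φ v w p = sff Φ w v p := by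
  rw [sff, d2_symm hΩ h.smooth hp, sff]

/-- The Weingarten relation. -/
lemma weingarten (hΩ : IsOpen Ω) (h : ConformalImmersion Ω Φ lam) {p : R2} (hp : p ∈ Ω)
    (u w : R2) : ⟪fderiv ℝ (gaussMap Φ) p u, fderiv ℝ Φ p w⟫ = - sff Φ u w p := by
  have h1 := fderiv_inner_apply ℝ (diffAt hΩ (contDiffOn_dir hΩ h.smooth w) hp)
    (diffAt hΩ (contDiffOn_gauss hΩ h) hp) u
  rw [fderiv_congr_on hΩ (g := fun _ => (0 : ℝ)) (fun q _ => inner_dir_gauss Φ q w) hp] at h1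
  simp only [fderiv_const_apply, zero_apply] at h1
  rw [real_inner_comm, sff, d2]
  linarith

lemma inner_dgauss_gauss (hΩ : IsOpen Ω) (h : ConformalImmersion Ω Φ lam) {p : R2} (hp : p ∈ Ω)
    (u : R2) : ⟪fderiv ℝ (gaussMap Φ) p u, gaussMap Φ p⟫ = 0 := by
  have hn := diffAt hΩ (contDiffOn_gauss hΩ h) hp
  have h1 := fderiv_inner_apply ℝ hn hn u
  rw [fderiv_congr_on hΩ (g := fun _ => (1 : ℝ))
    (fun q hq => by rw [real_inner_self_eq_norm_sq, norm_gauss h hq]; norm_num) hp] at h1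
  simp only [fderiv_const_apply, zero_apply] at h1
  rw [real_inner_comm] at h1
  linarith

lemma exp_two (x : ℝ) : rexp (2 * x) = rexp x ^ 2 := by rw [← Real.exp_nat_mul]; norm_num

/-- The derivative of the conformal factor, read off from `|∂_wΦ|² = e^{2λ}`. -/
lemma inner_d2_self (hΩ : IsOpen Ω) (h : ConformalImmersion Ω Φ lam) {p : R2} (hp : p ∈ Ω)
    {w : R2} (hw : ∀ q ∈ Ω, ‖fderiv ℝ Φ q w‖ = rexp (lam q)) (u : R2) :
    ⟪d2 Φ u w p, fderiv ℝ Φ p w⟫ = rexp (lam p) ^ 2 * fderiv ℝ lam p u := by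
  have hd := diffAt hΩ (contDiffOn_dir hΩ h.smooth w) hp
  have h1 := fderiv_inner_apply ℝ hd hd u
  have hl := diffAt hΩ h.smooth_lam hp
  rw [fderiv_congr_on hΩ (g := fun q => rexp (2 * lam q))
    (fun q hq => by rw [real_inner_self_eq_norm_sq, hw q hq, exp_two]) hp] at h1
  rw [((hl.hasFDerivAt.const_mul 2).exp).fderiv] at h1
  simp only [smul_apply, smul_eq_mul, exp_two] at h1
  rw [real_inner_comm] at h1
  rw [d2]
  linarith

lemma inner_d2_orth (hΩ : IsOpen Ω) (h : ConformalImmersion Ω Φ lam) {p : R2} (hp : p ∈ Ω)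
    (u : R2) : ⟪d2 Φ u ex p, fderiv ℝ Φ p ey⟫ = - ⟪d2 Φ u ey p, fderiv ℝ Φ p ex⟫ := by
  have h1 := fderiv_inner_apply ℝ (diffAt hΩ (contDiffOn_dir hΩ h.smooth ex) hp)
    (diffAt hΩ (contDiffOn_dir hΩ h.smooth ey) hp) u
  rw [fderiv_congr_on hΩ (f := fun t => ⟪fderiv ℝ Φ t ex, fderiv ℝ Φ t ey⟫) (g := fun _ => (0 : ℝ))
    (fun q hq => h.orth q hq) hp] at h1
  simp only [fderiv_const_apply, zero_apply] at h1
  rw [real_inner_comm] at h1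
  rw [d2, d2]
  linarith

/-- The Weingarten relation inserted in the frame expansion of `∂_u n`. -/
lemma inner_d2_dgauss (hΩ : IsOpen Ω) (h : ConformalImmersion Ω Φ lam) {p : R2} (hp : p ∈ Ω)
    (u : R2) (X : R3) :
    rexp (lam p) ^ 2 * ⟪X, fderiv ℝ (gaussMap Φ) p u⟫ =
      - (⟪X, fderiv ℝ Φ p ex⟫ * sff Φ u ex p + ⟪X, fderiv ℝ Φ p ey⟫ * sff Φ u ey p) := by
  rw [inner_frame (Real.exp_pos (lam p)) (h.norm_x p hp) (h.norm_y p hp) (norm_gauss h hp)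
    (h.orth p hp) (inner_x_gauss Φ p) (inner_y_gauss Φ p) X]
  have h1 := weingarten hΩ h hp u ex
  have h2 := weingarten hΩ h hp u ey
  have h3 := inner_dgauss_gauss hΩ h hp u
  change _ * ⟪_, fderiv ℝ Φ p ex⟫ + _ * ⟪_, fderiv ℝ Φ p ey⟫ + _ = _
  rw [h1, h2, h3]
  change ⟪_, fderiv ℝ Φ p ex⟫ * _ + ⟪_, fderiv ℝ Φ p ey⟫ * _ + _ = _
  ring

/-- The Codazzi equations before simplification: third derivatives of `Φ` cancel. -/
lemma codazzi_raw (hΩ : IsOpen Ω) (h : ConformalImmersion Ω Φ lam) {p : R2} (hp : p ∈ Ω)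
    (u v w : R2) :
    fderiv ℝ (sff Φ v w) p u - fderiv ℝ (sff Φ u w) p v =
      ⟪d2 Φ v w p, fderiv ℝ (gaussMap Φ) p u⟫ - ⟪d2 Φ u w p, fderiv ℝ (gaussMap Φ) p v⟫ := by
  have hn := diffAt hΩ (contDiffOn_gauss hΩ h) hp
  have h1 := fderiv_inner_apply ℝ (diffAt hΩ (contDiffOn_d2 hΩ h v w) hp) hn u
  have h2 := fderiv_inner_apply ℝ (diffAt hΩ (contDiffOn_d2 hΩ h u w) hp) hn v
  have h3 : fderiv ℝ (d2 Φ v w) p u = fderiv ℝ (d2 Φ u w) p v :=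
    d2_symm hΩ (contDiffOn_dir hΩ h.smooth w) hp u v
  change fderiv ℝ (sff Φ v w) p u = _ at h1
  change fderiv ℝ (sff Φ u w) p v = _ at h2
  rw [h1, h2, h3]
  ring

/-- The tangential parts of the second derivatives of `Φ` (the Christoffel symbols of a
conformal metric). -/
lemma christoffel (hΩ : IsOpen Ω) (h : ConformalImmersion Ω Φ lam) {p : R2} (hp : p ∈ Ω) :
    ⟪d2 Φ ex ex p, fderiv ℝ Φ p ex⟫ = rexp (lam p) ^ 2 * fderiv ℝ lam p ex ∧
    ⟪d2 Φ ex ex p, fderiv ℝ Φ p ey⟫ = - (rexp (lam p) ^ 2 * fderiv ℝ lam p ey) ∧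
    ⟪d2 Φ ex ey p, fderiv ℝ Φ p ex⟫ = rexp (lam p) ^ 2 * fderiv ℝ lam p ey ∧
    ⟪d2 Φ ex ey p, fderiv ℝ Φ p ey⟫ = rexp (lam p) ^ 2 * fderiv ℝ lam p ex ∧
    ⟪d2 Φ ey ey p, fderiv ℝ Φ p ex⟫ = - (rexp (lam p) ^ 2 * fderiv ℝ lam p ex) ∧
    ⟪d2 Φ ey ey p, fderiv ℝ Φ p ey⟫ = rexp (lam p) ^ 2 * fderiv ℝ lam p ey := by
  have h1 := inner_d2_self hΩ h hp (w := ex) h.norm_x ex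
  have h2 := inner_d2_self hΩ h hp (w := ex) h.norm_x ey
  have h3 := inner_d2_self hΩ h hp (w := ey) h.norm_y ex
  have h4 := inner_d2_self hΩ h hp (w := ey) h.norm_y ey
  have h5 := inner_d2_orth hΩ h hp ex
  have h6 := inner_d2_orth hΩ h hp ey
  rw [d2_symm hΩ h.smooth hp ey ex] at h2 h6
  refine ⟨h1, ?_, h2, h3, ?_, h4⟩ <;> linarith

lemma codazzi_y (hΩ : IsOpen Ω) (h : ConformalImmersion Ω Φ lam) {p : R2} (hp : p ∈ Ω) :
    fderiv ℝ (sff Φ ex ex) p ey - fderiv ℝ (sff Φ ex ey) p ex =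
      fderiv ℝ lam p ey * (sff Φ ex ex p + sff Φ ey ey p) := by
  have hs : fderiv ℝ (sff Φ ex ey) p = fderiv ℝ (sff Φ ey ex) p :=
    fderiv_congr_on hΩ (fun q hq => sff_symm hΩ h hq ex ey) hp
  obtain ⟨h1, h2, h3, h4, -, -⟩ := christoffel hΩ h hp
  rw [hs, codazzi_raw hΩ h hp]
  have hE : rexp (lam p) ^ 2 ≠ 0 := by positivity
  refine mul_left_cancel₀ hE ?_
  rw [mul_sub, inner_d2_dgauss hΩ h hp, inner_d2_dgauss hΩ h hp, d2_symm hΩ h.smooth hp ey ex,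
    h1, h2, h3, h4, sff_symm hΩ h hp ey ex]
  ring

lemma codazzi_x (hΩ : IsOpen Ω) (h : ConformalImmersion Ω Φ lam) {p : R2} (hp : p ∈ Ω) :
    fderiv ℝ (sff Φ ey ey) p ex - fderiv ℝ (sff Φ ex ey) p ey =
      fderiv ℝ lam p ex * (sff Φ ex ex p + sff Φ ey ey p) := by
  obtain ⟨-, -, h3, h4, h5, h6⟩ := christoffel hΩ h hp
  rw [codazzi_raw hΩ h hp]
  have hE : rexp (lam p) ^ 2 ≠ 0 := by positivity
  refine mul_left_cancel₀ hE ?_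
  rw [mul_sub, inner_d2_dgauss hΩ h hp, inner_d2_dgauss hΩ h hp, h3, h4, h5, h6,
    sff_symm hΩ h hp ey ex]
  ring

/-- Half the difference of the diagonal entries of the second fundamental form; on `Ω` it is
`Å₁₁ = -Å₂₂`. -/
def halfDiff (Φ : R2 → R3) (p : R2) : ℝ := (sff Φ ex ex p - sff Φ ey ey p) / 2

lemma contDiffOn_halfDiff (hΩ : IsOpen Ω) (h : ConformalImmersion Ω Φ lam) :
    ContDiffOn ℝ (⊤ : ℕ∞) (halfDiff Φ) Ω :=
  ((contDiffOn_sff hΩ h ex ex).sub (contDiffOn_sff hΩ h ey ey)).div_const 2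

lemma meanCurv_mul_exp (Φ : R2 → R3) (lam : R2 → ℝ) (p : R2) :
    meanCurv Φ lam p * rexp (2 * lam p) = (sff Φ ex ex p + sff Φ ey ey p) / 2 := by
  have : rexp (-(2 * lam p)) * rexp (2 * lam p) = 1 := by rw [← Real.exp_add]; simp
  rw [meanCurv]
  linear_combination (sff Φ ex ex p + sff Φ ey ey p) / 2 * this

lemma tfNormSq_eq (hΩ : IsOpen Ω) (h : ConformalImmersion Ω Φ lam) {p : R2} (hp : p ∈ Ω) :
    tfNormSq Φ lam p = 2 * halfDiff Φ p ^ 2 + 2 * sff Φ ex ey p ^ 2 := by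
  rw [tfNormSq, tf11, tf12, tf21, tf22, meanCurv_mul_exp, halfDiff, sff_symm hΩ h hp ey ex]
  ring

lemma fderiv_meanCurv (hΩ : IsOpen Ω) (h : ConformalImmersion Ω Φ lam) {p : R2} (hp : p ∈ Ω)
    (v : R2) :
    fderiv ℝ (meanCurv Φ lam) p v * rexp (2 * lam p) =
      (fderiv ℝ (sff Φ ex ex) p v + fderiv ℝ (sff Φ ey ey) p v) / 2
        - fderiv ℝ lam p v * (sff Φ ex ex p + sff Φ ey ey p) := by
  have h1 := (diffAt hΩ (contDiffOn_sff hΩ h ex ex) hp).hasFDerivAt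
  have h2 := (diffAt hΩ (contDiffOn_sff hΩ h ey ey) hp).hasFDerivAt
  have hl := (diffAt hΩ h.smooth_lam hp).hasFDerivAt
  have hH := (((hl.const_mul 2).neg.exp).mul (h1.add h2)).mul_const (2⁻¹ : ℝ)
  have hH' : HasFDerivAt (meanCurv Φ lam) _ p := hH
  have : rexp (-(2 * lam p)) * rexp (2 * lam p) = 1 := by rw [← Real.exp_add]; simp
  rw [hH'.fderiv]
  simp
  linear_combination ((fderiv ℝ (sff Φ ex ex) p v + fderiv ℝ (sff Φ ey ey) p v) / 2
        - fderiv ℝ lam p v * (sff Φ ex ex p + sff Φ ey ey p)) * this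

lemma fderiv_halfDiff (hΩ : IsOpen Ω) (h : ConformalImmersion Ω Φ lam) {p : R2} (hp : p ∈ Ω)
    (v : R2) :
    fderiv ℝ (halfDiff Φ) p v =
      (fderiv ℝ (sff Φ ex ex) p v - fderiv ℝ (sff Φ ey ey) p v) / 2 := by
  have h1 := (diffAt hΩ (contDiffOn_sff hΩ h ex ex) hp).hasFDerivAt
  have h2 := (diffAt hΩ (contDiffOn_sff hΩ h ey ey) hp).hasFDerivAt
  have hH : HasFDerivAt (halfDiff Φ) _ p := (h1.sub h2).mul_const (2⁻¹ : ℝ)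
  rw [hH.fderiv]
  simp
  ring

/-- First component of `e^{2λ}∇H = div Å`. -/
lemma meanCurv_x (hΩ : IsOpen Ω) (h : ConformalImmersion Ω Φ lam) {p : R2} (hp : p ∈ Ω) :
    pdx (meanCurv Φ lam) p * rexp (2 * lam p) =
      fderiv ℝ (halfDiff Φ) p ex + fderiv ℝ (sff Φ ex ey) p ey := by
  have h1 := fderiv_meanCurv hΩ h hp ex
  have h2 := codazzi_x hΩ h hp
  have h3 := fderiv_halfDiff hΩ h hp ex
  change fderiv ℝ (meanCurv Φ lam) p ex * _ = _
  linarith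

/-- Second component of `e^{2λ}∇H = div Å`. -/
lemma meanCurv_y (hΩ : IsOpen Ω) (h : ConformalImmersion Ω Φ lam) {p : R2} (hp : p ∈ Ω) :
    pdy (meanCurv Φ lam) p * rexp (2 * lam p) =
      fderiv ℝ (sff Φ ex ey) p ex - fderiv ℝ (halfDiff Φ) p ey := by
  have h1 := fderiv_meanCurv hΩ h hp ey
  have h2 := codazzi_y hΩ h hp
  have h3 := fderiv_halfDiff hΩ h hp ey
  change fderiv ℝ (meanCurv Φ lam) p ey * _ = _
  linarith

end Geometry

/-! ### Integration by parts against Lipschitz functions -/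

lemma volume_disk_lt_top (r : ℝ) : volume (disk r) < ⊤ := measure_ball_lt_top

/-- On the compact half disk a continuous function is bounded, hence so is its product with a
bounded measurable function. -/
lemma memLp_disk {f m : R2 → ℝ} (hf : ContinuousOn f (disk 1)) (hm : Measurable m) {B : ℝ}
    (hB : ∀ p, |m p| ≤ B) (q : ENNReal) :
    MemLp (fun p => f p * m p) q (volume.restrict (disk (1/2))) := by
  have : IsFiniteMeasure (volume.restrict (disk (1/2))) :=
    ⟨by rw [Measure.restrict_apply_univ]; exact volume_disk_lt_top _⟩
  have hsub : Metric.closedBall (0 : R2) (1/2) ⊆ disk 1 :=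
    Metric.closedBall_subset_ball (by norm_num)
  obtain ⟨M, hM⟩ := (isCompact_closedBall (0 : R2) (1/2)).exists_bound_of_continuousOn
    (hf.mono hsub)
  have hmeas : AEStronglyMeasurable f (volume.restrict (disk (1/2))) :=
    (hf.mono (Metric.ball_subset_closedBall.trans hsub)).aestronglyMeasurable
      (isOpen_disk _).measurableSet
  refine MemLp.of_bound (hmeas.mul hm.aestronglyMeasurable) (M * B) ?_
  refine ae_restrict_of_forall_mem (isOpen_disk _).measurableSet fun p hp => ?_
  have h1 := hM p (Metric.ball_subset_closedBall hp)
  rw [norm_mul]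
  exact mul_le_mul h1 (hB p) (norm_nonneg _) ((norm_nonneg _).trans h1)

lemma integrableOn_disk {f m : R2 → ℝ} (hf : ContinuousOn f (disk 1)) (hm : Measurable m) {B : ℝ}
    (hB : ∀ p, |m p| ≤ B) : IntegrableOn (fun p => f p * m p) (disk (1/2)) :=
  memLp_one_iff_integrable.1 (memLp_disk hf hm hB 1)

section Lipschitz
variable {u : R2 → ℝ} {K : NNReal}

lemma hasCompactSupport_of_disk {F : Type*} [Zero F] {w : R2 → F}
    (hs : tsupport w ⊆ disk (1/2)) : HasCompactSupport w :=
  HasCompactSupport.of_support_subset_isCompact (isCompact_closedBall (0 : R2) (1/2))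
    ((subset_tsupport w).trans (hs.trans Metric.ball_subset_closedBall))

lemma exists_bound_lipschitz (hu : LipschitzWith K u) (hs : tsupport u ⊆ disk (1/2)) :
    ∃ B, ∀ p, |u p| ≤ B :=
  hu.continuous.bounded_above_of_compact_support (hasCompactSupport_of_disk hs)

lemma norm_fderiv_apply_le {F : Type*} [NormedAddCommGroup F] [NormedSpace ℝ F] {w : R2 → F}
    (hw : LipschitzWith K w) (v p : R2) : ‖fderiv ℝ w p v‖ ≤ K * ‖v‖ :=
  ((fderiv ℝ w p).le_opNorm v).trans
    (mul_le_mul_of_nonneg_right (norm_fderiv_le_of_lipschitz ℝ hw) (norm_nonneg _))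

lemma integrableOn_fderiv_mul {g : R2 → ℝ} (hg : ContDiffOn ℝ (⊤ : ℕ∞) g (disk 1))
    (hu : LipschitzWith K u) (hs : tsupport u ⊆ disk (1/2)) (v : R2) :
    IntegrableOn (fun p => fderiv ℝ g p v * u p) (disk (1/2)) := by
  obtain ⟨B, hB⟩ := exists_bound_lipschitz hu hs
  exact integrableOn_disk (contDiffOn_dir (isOpen_disk 1) hg v).continuousOn
    hu.continuous.measurable hB

lemma integrableOn_mul_fderiv {g : R2 → ℝ} (hg : ContDiffOn ℝ (⊤ : ℕ∞) g (disk 1))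
    (hu : LipschitzWith K u) (v : R2) :
    IntegrableOn (fun p => g p * fderiv ℝ u p v) (disk (1/2)) :=
  integrableOn_disk hg.continuousOn (measurable_fderiv_apply_const ℝ u v)
    (fun p => norm_fderiv_apply_le hu v p)

/-- Integration by parts. The function `g` is only smooth on the larger disk, so it is first cut
off to a globally Lipschitz function. -/
lemma integral_by_parts {g : R2 → ℝ} (hg : ContDiffOn ℝ (⊤ : ℕ∞) g (disk 1))
    (hu : LipschitzWith K u) (hs : tsupport u ⊆ disk (1/2)) (v : R2) :
    ∫ p in disk (1/2), fderiv ℝ g p v * u p = - ∫ p in disk (1/2), g p * fderiv ℝ u p v := by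
  let χ : ContDiffBump (0 : R2) := ⟨1/2, 3/4, by norm_num, by norm_num⟩
  have hχ : tsupport χ ⊆ disk 1 := by
    rw [χ.tsupport_eq]; exact Metric.closedBall_subset_ball (by norm_num)
  have hχ1 : ∀ p ∈ disk (1/2), χ p = 1 := fun p hp =>
    χ.one_of_mem_closedBall (Metric.ball_subset_closedBall hp)
  set G : R2 → ℝ := fun p => χ p * g p with hG
  have hGs : ContDiff ℝ (⊤ : ℕ∞) G := by
    rw [contDiff_iff_contDiffAt]
    intro p
    by_cases hp : p ∈ disk 1
    · exact χ.contDiff.contDiffAt.mul (hg.contDiffAt ((isOpen_disk 1).mem_nhds hp))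
    · have h0 : G =ᶠ[nhds p] fun _ => 0 := by
        filter_upwards [notMem_tsupport_iff_eventuallyEq.1 (fun h => hp (hχ h))] with q hq
        simp only [hG, hq, Pi.zero_apply, zero_mul]
      exact contDiffAt_const.congr_of_eventuallyEq h0
  have hGc : HasCompactSupport G := χ.hasCompactSupport.mul_right
  obtain ⟨L, hL⟩ := hGs.lipschitzWith_of_hasCompactSupport hGc (by simp)
  have hGg : ∀ p ∈ disk (1/2), G p = g p := fun p hp => by simp only [hG, hχ1 p hp, one_mul]
  have key := hL.integral_lineDeriv_mul_eq (μ := volume) hu (hasCompactSupport_of_disk hs) v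
  have h1 : ∫ p, lineDeriv ℝ G p v * u p = ∫ p in disk (1/2), fderiv ℝ g p v * u p := by
    rw [← setIntegral_eq_integral_of_forall_compl_eq_zero (s := disk (1/2))]
    · refine setIntegral_congr_fun (isOpen_disk _).measurableSet fun p hp => ?_
      rw [(hGs.differentiable (by simp)).differentiableAt.lineDeriv_eq_fderiv,
        fderiv_congr_on (isOpen_disk (1/2)) hGg hp]
    · intro p hp
      rw [image_eq_zero_of_notMem_tsupport (fun h => hp (hs h)), mul_zero]
  have h2 : ∫ p, lineDeriv ℝ u p (-v) * G p = ∫ p, -(G p * fderiv ℝ u p v) := by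
    refine integral_congr_ae ?_
    filter_upwards [hu.ae_differentiableAt (μ := volume)] with p hp
    rw [hp.lineDeriv_eq_fderiv, map_neg]
    ring
  have h3 : ∫ p, -(G p * fderiv ℝ u p v) = ∫ p in disk (1/2), -(g p * fderiv ℝ u p v) := by
    rw [← setIntegral_eq_integral_of_forall_compl_eq_zero (s := disk (1/2))]
    · refine setIntegral_congr_fun (isOpen_disk _).measurableSet fun p hp => ?_
      simp only [hGg p hp]
    · intro p hp
      rw [fderiv_of_notMem_tsupport ℝ (fun h => hp (hs h))]
      simp
  rw [← h1, key, h2, h3, integral_neg]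

end Lipschitz

lemma integral_combination {f₁ f₂ f₃ f₄ : R2 → ℝ} {Ω : Set R2} (h₁ : IntegrableOn f₁ Ω)
    (h₂ : IntegrableOn f₂ Ω) (h₃ : IntegrableOn f₃ Ω) (h₄ : IntegrableOn f₄ Ω) :
    ∫ p in Ω, (f₁ p + f₂ p + f₃ p - f₄ p) =
      (∫ p in Ω, f₁ p) + (∫ p in Ω, f₂ p) + (∫ p in Ω, f₃ p) - ∫ p in Ω, f₄ p := by
  have h12 : IntegrableOn (fun p => f₁ p + f₂ p) Ω := h₁.add h₂
  have h123 : IntegrableOn (fun p => f₁ p + f₂ p + f₃ p) Ω := h12.add h₃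
  rw [integral_sub h123 h₄, integral_add h12 h₃, integral_add h₁ h₂]

/-! ### Cauchy–Schwarz -/

/-- The pointwise Cauchy–Schwarz inequality `|Å : ∇U| ≤ |Å| |∇U|`. -/
lemma abs_contraction_le (a b c d e f : ℝ) :
    |a * c + b * d + b * e - a * f| ≤
      √(2 * a ^ 2 + 2 * b ^ 2) * √(c ^ 2 + d ^ 2 + e ^ 2 + f ^ 2) := by
  rw [← Real.sqrt_mul (by positivity), ← Real.sqrt_sq_eq_abs]
  apply Real.sqrt_le_sqrt
  nlinarith [sq_nonneg (a * d - b * c), sq_nonneg (a * e - b * c), sq_nonneg (a * f + a * c),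
    sq_nonneg (b * e - b * d), sq_nonneg (b * f + a * d), sq_nonneg (b * f + a * e)]

lemma integral_mul_le_l2norm {f g : R2 → ℝ} {Ω : Set R2} (hf0 : ∀ p, 0 ≤ f p)
    (hg0 : ∀ p, 0 ≤ g p) (hf : MemLp f 2 (volume.restrict Ω))
    (hg : MemLp g 2 (volume.restrict Ω)) :
    ∫ p in Ω, f p * g p ≤ l2norm f Ω * l2norm g Ω := by
  have h := integral_mul_le_Lp_mul_Lq_of_nonneg (μ := volume.restrict Ω)
    Real.HolderConjugate.two_two (Filter.Eventually.of_forall hf0)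
    (Filter.Eventually.of_forall hg0) (by simpa using hf) (by simpa using hg)
  simpa [l2norm, Real.sqrt_eq_rpow] using h



/-- Control of the distributional gradient of the mean curvature against compactly supported
Lipschitz test vector fields (Proposition `110320201432`). -/
theorem meanCurv_gradient_control :
    ∀ C₀ : ℝ, 0 < C₀ → ∃ C > (0:ℝ),
      ∀ (Φ : R2 → R3) (lam : R2 → ℝ),
        ConformalImmersion (disk 1) Φ lam →
        IsWillmore Φ lam (disk 1) →
        (∫ p in disk 1, gradSqV (gaussMap Φ) p) ≤ 4 * π / 3 →
        wl2le (gradNorm lam) (disk 1) C₀ →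
        ∀ (U : R2 → R2) (K : NNReal), LipschitzWith K U → tsupport U ⊆ disk (1/2) →
          |∫ p in disk (1/2),
              (pdx (meanCurv Φ lam) p * (U p).1 + pdy (meanCurv Φ lam) p * (U p).2)
                * Real.exp (2 * lam p)|
            ≤ C * l2norm (ringA Φ lam) (disk (1/2))
                * l2norm (fun p => Real.exp (lam p) *
                    Real.sqrt ((pdx U p).1 ^ 2 + (pdy U p).1 ^ 2
                      + (pdx U p).2 ^ 2 + (pdy U p).2 ^ 2)) (disk (1/2)) := by
  intro C₀ _
  -- The pointwise Cauchy–Schwarz inequality for the Frobenius norm gives the constant `1`.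
  refine ⟨1, one_pos, ?_⟩
  intro Φ lam h _ _ _ U K hU hs
  have hΩ := isOpen_disk 1
  have hsub : disk (1/2) ⊆ disk 1 := Metric.ball_subset_ball (by norm_num)
  have hmeas : MeasurableSet (disk (1/2)) := (isOpen_disk _).measurableSet
  set a : R2 → ℝ := halfDiff Φ with ha_def
  set b : R2 → ℝ := sff Φ ex ey with hb_def
  have ha : ContDiffOn ℝ (⊤ : ℕ∞) a (disk 1) := contDiffOn_halfDiff hΩ h
  have hb : ContDiffOn ℝ (⊤ : ℕ∞) b (disk 1) := contDiffOn_sff hΩ h ex ey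
  set U₁ : R2 → ℝ := fun p => (U p).1 with hU₁
  set U₂ : R2 → ℝ := fun p => (U p).2 with hU₂
  have hL₁ : LipschitzWith (1 * K) U₁ := LipschitzWith.prod_fst.comp hU
  have hL₂ : LipschitzWith (1 * K) U₂ := LipschitzWith.prod_snd.comp hU
  have hs₁ : tsupport U₁ ⊆ disk (1/2) :=
    (closure_mono (Function.support_subset_iff'.2 fun p hp => by
      simp [hU₁, Function.notMem_support.1 hp])).trans hs
  have hs₂ : tsupport U₂ ⊆ disk (1/2) :=
    (closure_mono (Function.support_subset_iff'.2 fun p hp => by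
      simp [hU₂, Function.notMem_support.1 hp])).trans hs
  -- Codazzi and integration by parts turn the left-hand side into `-∫ Å : ∇U`.
  have hI : ∫ p in disk (1/2),
      (pdx (meanCurv Φ lam) p * (U p).1 + pdy (meanCurv Φ lam) p * (U p).2)
        * Real.exp (2 * lam p) =
      - ∫ p in disk (1/2), (a p * fderiv ℝ U₁ p ex + b p * fderiv ℝ U₁ p ey
        + b p * fderiv ℝ U₂ p ex - a p * fderiv ℝ U₂ p ey) := by
    have e1 : ∫ p in disk (1/2),
        (pdx (meanCurv Φ lam) p * (U p).1 + pdy (meanCurv Φ lam) p * (U p).2)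
          * Real.exp (2 * lam p) =
        ∫ p in disk (1/2), (fderiv ℝ a p ex * U₁ p + fderiv ℝ b p ey * U₁ p
          + fderiv ℝ b p ex * U₂ p - fderiv ℝ a p ey * U₂ p) := by
      refine setIntegral_congr_fun hmeas fun p hp => ?_
      have hx := meanCurv_x hΩ h (hsub hp)
      have hy := meanCurv_y hΩ h (hsub hp)
      simp only [hU₁, hU₂]
      linear_combination (U p).1 * hx + (U p).2 * hy
    have i1 := integrableOn_fderiv_mul ha hL₁ hs₁ ex
    have i2 := integrableOn_fderiv_mul hb hL₁ hs₁ ey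
    have i3 := integrableOn_fderiv_mul hb hL₂ hs₂ ex
    have i4 := integrableOn_fderiv_mul ha hL₂ hs₂ ey
    have j1 := integrableOn_mul_fderiv ha hL₁ ex
    have j2 := integrableOn_mul_fderiv hb hL₁ ey
    have j3 := integrableOn_mul_fderiv hb hL₂ ex
    have j4 := integrableOn_mul_fderiv ha hL₂ ey
    rw [e1, integral_combination i1 i2 i3 i4, integral_combination j1 j2 j3 j4,
      integral_by_parts ha hL₁ hs₁, integral_by_parts hb hL₁ hs₁,
      integral_by_parts hb hL₂ hs₂, integral_by_parts ha hL₂ hs₂]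
    ring
  set N : R2 → ℝ := fun p => √((pdx U p).1 ^ 2 + (pdy U p).1 ^ 2
                      + (pdx U p).2 ^ 2 + (pdy U p).2 ^ 2) with hN
  have mx : Measurable (pdx U) := measurable_fderiv_apply_const ℝ U (1, 0)
  have my : Measurable (pdy U) := measurable_fderiv_apply_const ℝ U (0, 1)
  have hNm : Measurable N :=
    ((((mx.fst.pow_const 2).add (my.fst.pow_const 2)).add (mx.snd.pow_const 2)).add
      (my.snd.pow_const 2)).sqrt
  have hNb : ∀ p, |N p| ≤ √(4 * (K : ℝ) ^ 2) := by
    intro p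
    rw [abs_of_nonneg (Real.sqrt_nonneg _)]
    apply Real.sqrt_le_sqrt
    have hUx : ‖pdx U p‖ ≤ K := by simpa [pdx, Prod.norm_def] using norm_fderiv_apply_le hU (1, 0) p
    have hUy : ‖pdy U p‖ ≤ K := by simpa [pdy, Prod.norm_def] using norm_fderiv_apply_le hU (0, 1) p
    have s1 := sq_le_sq' (abs_le.1 ((norm_fst_le _).trans hUx)).1
      (abs_le.1 ((norm_fst_le _).trans hUx)).2
    have s2 := sq_le_sq' (abs_le.1 ((norm_fst_le _).trans hUy)).1
      (abs_le.1 ((norm_fst_le _).trans hUy)).2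
    have s3 := sq_le_sq' (abs_le.1 ((norm_snd_le _).trans hUx)).1
      (abs_le.1 ((norm_snd_le _).trans hUx)).2
    have s4 := sq_le_sq' (abs_le.1 ((norm_snd_le _).trans hUy)).1
      (abs_le.1 ((norm_snd_le _).trans hUy)).2
    linarith
  have hlc : ContinuousOn lam (disk 1) := h.smooth_lam.continuousOn
  have hG2 : MemLp (fun p => Real.exp (lam p) * N p) 2 (volume.restrict (disk (1/2))) :=
    memLp_disk hlc.rexp hNm hNb 2
  have hF2 : MemLp (ringA Φ lam) 2 (volume.restrict (disk (1/2))) := by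
    have hc : ContinuousOn
        (fun p => Real.exp (-(lam p)) * √(2 * a p ^ 2 + 2 * b p ^ 2)) (disk 1) :=
      hlc.neg.rexp.mul (((ha.continuousOn.pow 2).const_mul 2).add
        ((hb.continuousOn.pow 2).const_mul 2)).sqrt
    refine (memLp_disk hc (m := fun _ => 1) measurable_const (B := 1) (by simp) 2).ae_eq ?_
    refine ae_restrict_of_forall_mem hmeas fun p hp => ?_
    rw [ringA, tfNormSq_eq hΩ h (hsub hp)]
    exact mul_one _
  have hCS := integral_mul_le_l2norm (f := ringA Φ lam)
    (g := fun p => Real.exp (lam p) * N p) (fun p => mul_nonneg (Real.exp_pos _).le (Real.sqrt_nonneg _))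
    (fun p => mul_nonneg (Real.exp_pos _).le (Real.sqrt_nonneg _)) hF2 hG2
  rw [hI, abs_neg, one_mul]
  refine le_trans ?_ hCS
  rw [← Real.norm_eq_abs]
  refine norm_integral_le_of_norm_le (hF2.integrable_mul hG2) ?_
  filter_upwards [ae_restrict_mem hmeas,
    ae_restrict_of_ae (hU.ae_differentiableAt (μ := volume))] with p hp hd
  have d1 : ∀ v, fderiv ℝ U₁ p v = (fderiv ℝ U p v).1 := fun v => by
    rw [hd.hasFDerivAt.fst.fderiv]; rfl
  have d2 : ∀ v, fderiv ℝ U₂ p v = (fderiv ℝ U p v).2 := fun v => by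
    rw [hd.hasFDerivAt.snd.fderiv]; rfl
  have hexp : Real.exp (-(lam p)) * Real.exp (lam p) = 1 := by rw [← Real.exp_add]; simp
  have hA : ringA Φ lam p * (Real.exp (lam p) * N p) = √(2 * a p ^ 2 + 2 * b p ^ 2) * N p := by
    rw [ringA, tfNormSq_eq hΩ h (hsub hp)]
    linear_combination √(2 * a p ^ 2 + 2 * b p ^ 2) * N p * hexp
  rw [hA, d1, d1, d2, d2]
  exact abs_contraction_le _ _ _ _ _ _

end
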